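/- arXiv:1301.4391 — 2 statements merged into one kernel-verified Lean document; each statement's English description precedes it below -/
import Mathlib

section
/- The difference between the time–space reconstruction and the elliptic-reconstruction interpolant (Lemma on Û − ω, equation (2.19) of the paper): assuming the Crank–Nicolson relation Uⁿ = ΠⁿUⁿ⁻¹ − k_n·W(t_{n-1/2}), for every t ∈ [t_{n-1}, t_n] one has (Û − ω)(t) = (1/2)·(t_n − t)·(t − t_{n-1})·Rⁿ(w), where w := (2/k_n)·(W(t_{n-1/2}) − W(t_{n-1})). -/
open Complex intervalIntegral

/-- The difference between the time–space reconstruction `Û` and the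
elliptic-reconstruction interpolant `ω` (equation (2.19) of the paper): under the
Crank–Nicolson relation `Uⁿ = ΠⁿUⁿ⁻¹ − kₙ·W(t_{n-1/2})`, for every `t ∈ [t_{n-1}, tₙ]`,
`(Û − ω)(t) = (1/2)·(tₙ − t)·(t − t_{n-1})·Rⁿ(w)` with
`w := (2/kₙ)·(W(t_{n-1/2}) − W(t_{n-1}))`. -/
theorem time_space_reconstruction_difference
    {E : Type*} [NormedAddCommGroup E] [InnerProductSpace ℂ E] [CompleteSpace E]
    (tp tn : ℝ) (htptn : tp < tn)
    (V : Submodule ℂ E) [FiniteDimensional ℂ V]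
    (W : ℝ → V) (c : V) (hW : ∀ t : ℝ, W t = W tp + ((t - tp : ℝ) : ℂ) • c)
    (R : V →ₗ[ℂ] E)
    (Rprev : E)   -- the element Rⁿ⁻¹Uⁿ⁻¹
    (PU : V)      -- the element ΠⁿUⁿ⁻¹
    (Un : V)
    (hCN : Un = PU - ((tn - tp : ℝ) : ℂ) • W ((tp + tn) / 2))
    (Uhat ω : ℝ → E)
    (hUhat : ∀ t : ℝ,
      Uhat t = Rprev + (((t - tp) / (tn - tp) : ℝ) : ℂ) • (R PU - Rprev)
          - ∫ s in tp..t, R (W s))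
    (hω : ∀ t : ℝ,
      ω t = (((tn - t) / (tn - tp) : ℝ) : ℂ) • Rprev
          + (((t - tp) / (tn - tp) : ℝ) : ℂ) • R Un) :
    ∀ t ∈ Set.Icc tp tn,
      Uhat t - ω t
        = (((1 / 2) * (tn - t) * (t - tp) : ℝ) : ℂ) •
            R (((2 / (tn - tp) : ℝ) : ℂ) • (W ((tp + tn) / 2) - W tp)) := by
  intro t _
  have hk : ((tn : ℂ) - tp) ≠ 0 := by
    have h : tn - tp ≠ 0 := (sub_pos.mpr htptn).ne'
    exact_mod_cast h
  have hr : (∫ s in tp..t, (s - tp)) = (t - tp) ^ 2 / 2 := by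
    rw [intervalIntegral.integral_sub ((by fun_prop : Continuous fun s : ℝ => s).intervalIntegrable _ _)
      ((by fun_prop : Continuous fun _ : ℝ => tp).intervalIntegrable _ _)]
    simp
    ring
  have hI : (∫ s in tp..t, R (W s))
      = ((t - tp : ℝ) : ℂ) • R (W tp) + (((t - tp) ^ 2 / 2 : ℝ) : ℂ) • R c := by
    have h1 : ∀ s, R (W s) = R (W tp) + ((s - tp : ℝ) : ℂ) • R c := by
      intro s
      rw [hW s, map_add, map_smul]
    rw [show (fun s => R (W s)) = fun s => R (W tp) + ((s - tp : ℝ) : ℂ) • R c from funext h1]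
    rw [intervalIntegral.integral_add
      ((by fun_prop : Continuous fun _ : ℝ => R (W tp)).intervalIntegrable _ _),
      intervalIntegral.integral_smul_const, intervalIntegral.integral_ofReal, hr,
      intervalIntegral.integral_const, Complex.coe_smul, Complex.coe_smul]
    · apply Continuous.intervalIntegrable
      fun_prop
  rw [hUhat, hω, hI, hCN, hW ((tp + tn) / 2)]
  simp only [map_add, map_sub, map_smul, add_sub_cancel_left]
  push_cast
  match_scalars <;> field_simp <;> ring
end

section
/- Rewriting of the first residual (Lemma 3.4 of the paper): define R₁(t) := (Rⁿ(W(t)) − W(t)) − (Rⁿ(ΠⁿUⁿ⁻¹) − Rⁿ⁻¹Uⁿ⁻¹)/k_n + i·α·ℓ₀(t)·(Δⁿ⁻¹Uⁿ⁻¹ − Πⁿ(Δⁿ⁻¹Uⁿ⁻¹)). Then, assuming the Crank–Nicolson relation Uⁿ = ΠⁿUⁿ⁻¹ − k_n·W(t_{n-1/2}), for every t ∈ [t_{n-1}, t_n]: R₁(t) = (t − t_{n-1/2})·(Rⁿw − w) − ((RⁿUⁿ − Uⁿ) − (Rⁿ⁻¹Uⁿ⁻¹ − Uⁿ⁻¹))/k_n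 + ( y − Πⁿy ), where w := (2/k_n)·(W(t_{n-1/2}) − W(t_{n-1})) and y := i·α·ℓ₀(t)·Δⁿ⁻¹Uⁿ⁻¹ + Uⁿ⁻¹/k_n. -/
open Complex

/-- Rewriting of the first residual (Lemma 3.4 of the paper): under the
Crank–Nicolson relation `Uⁿ = ΠⁿUⁿ⁻¹ − kₙ·W(t_{n-1/2})`, for every `t ∈ [t_{n-1}, tₙ]`,
`R₁(t) = (t − t_{n-1/2})·(Rⁿw − w) − ((RⁿUⁿ − Uⁿ) − (Rⁿ⁻¹Uⁿ⁻¹ − Uⁿ⁻¹))/kₙ + (y − Πⁿy)`,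
with `w := (2/kₙ)(W(t_{n-1/2}) − W(t_{n-1}))` and `y := iαℓ₀(t)·Δⁿ⁻¹Uⁿ⁻¹ + Uⁿ⁻¹/kₙ`. -/
theorem first_residual_rewriting
    {H : Type*} [NormedAddCommGroup H] [InnerProductSpace ℂ H] [CompleteSpace H]
    (tp tn : ℝ) (htptn : tp < tn)
    (α : ℝ)
    (Vp Vn : Submodule ℂ H) [FiniteDimensional ℂ Vp] [FiniteDimensional ℂ Vn]
    (Δp : Vp →ₗ[ℂ] Vp)
    (Rp : Vp →ₗ[ℂ] H) (Rn : Vn →ₗ[ℂ] H)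
    (P : Vp →ₗ[ℂ] Vn)
    (Up : Vp) (Un : Vn)
    (W : ℝ → Vn) (c : Vn) (hW : ∀ t : ℝ, W t = W tp + ((t - tp : ℝ) : ℂ) • c)
    (hCN : Un = P Up - ((tn - tp : ℝ) : ℂ) • W ((tp + tn) / 2))
    (R₁ : ℝ → H)
    (hR₁ : ∀ t : ℝ, R₁ t
        = (Rn (W t) - ((W t : Vn) : H))
          - ((1 / (tn - tp) : ℝ) : ℂ) • (Rn (P Up) - Rp Up)
          + (Complex.I * (α : ℂ) * (((tn - t) / (tn - tp) : ℝ) : ℂ)) •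
              (((Δp Up : Vp) : H) - ((P (Δp Up) : Vn) : H))) :
    ∀ t ∈ Set.Icc tp tn,
      R₁ t
        = ((t - (tp + tn) / 2 : ℝ) : ℂ) •
              (Rn (((2 / (tn - tp) : ℝ) : ℂ) • (W ((tp + tn) / 2) - W tp))
                - ((((2 / (tn - tp) : ℝ) : ℂ) • (W ((tp + tn) / 2) - W tp) : Vn) : H))
          - ((1 / (tn - tp) : ℝ) : ℂ) •
              ((Rn Un - ((Un : Vn) : H)) - (Rp Up - ((Up : Vp) : H)))
          + ((((Complex.I * (α : ℂ) * (((tn - t) / (tn - tp) : ℝ) : ℂ)) • Δp Up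
                + ((1 / (tn - tp) : ℝ) : ℂ) • Up : Vp) : H)
              - ((P ((Complex.I * (α : ℂ) * (((tn - t) / (tn - tp) : ℝ) : ℂ)) • Δp Up
                + ((1 / (tn - tp) : ℝ) : ℂ) • Up) : Vn) : H)) := by
  intro t _
  have hk : ((tn : ℂ) - (tp : ℂ)) ≠ 0 := by
    rw [← Complex.ofReal_sub]
    exact Complex.ofReal_ne_zero.mpr (sub_pos.mpr htptn).ne'
  have hw : ((2 / (tn - tp) : ℝ) : ℂ) • (W ((tp + tn) / 2) - W tp) = c := by
    rw [hW ((tp + tn) / 2), add_sub_cancel_left, smul_smul]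
    have : ((2 / (tn - tp) : ℝ) : ℂ) * (((tp + tn) / 2 - tp : ℝ) : ℂ) = 1 := by
      push_cast
      field_simp
      ring
    rw [this, one_smul]
  rw [hw, hR₁ t, hCN, hW t, hW ((tp + tn) / 2)]
  simp only [map_add, map_sub, map_smul, Submodule.coe_add, Submodule.coe_sub,
    Submodule.coe_smul]
  push_cast
  match_scalars <;> field_simp <;> ring
end
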